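/- arXiv:2307.00684 — 2 statements merged into one kernel-verified Lean document; each statement's English description precedes it below -/
import Mathlib

section
/- (Lemma 3, square-summability) If α > L, then the sequence {Z^t} generated by the proximal network-slimming iteration satisfies, for every N ≥ 1, Σ_{t=1}^{N−1} ((α − L)/2)·‖Z^{t+1} − Z^t‖₂² ≤ F(Z^1) − F(Z^N) ≤ F(Z^1); consequently Σ_{t=1}^{∞} ‖Z^{t+1} − Z^t‖₂² ≤ (2/(α − L))·F(Z^1) < ∞. -/
noncomputable section

/-- Concatenation `W̃ = (W, γ)` of `W ∈ ℝⁿ` and `γ ∈ ℝᶜ` into a single Euclidean vector. -/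
def pairWγ {n c : ℕ} (W : EuclideanSpace ℝ (Fin n)) (γ : EuclideanSpace ℝ (Fin c)) :
    EuclideanSpace ℝ (Fin n ⊕ Fin c) :=
  (EuclideanSpace.equiv (Fin n ⊕ Fin c) ℝ).symm (Sum.elim (fun i => W i) (fun j => γ j))

/-- Partial gradient `∇_W L̃(W, γ)`. -/
def gradW {n c : ℕ} (Lt : EuclideanSpace ℝ (Fin n ⊕ Fin c) → ℝ)
    (W : EuclideanSpace ℝ (Fin n)) (γ : EuclideanSpace ℝ (Fin c)) : EuclideanSpace ℝ (Fin n) :=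
  (EuclideanSpace.equiv (Fin n) ℝ).symm (fun i => gradient Lt (pairWγ W γ) (Sum.inl i))

/-- Partial gradient `∇_γ L̃(W, γ)`. -/
def gradG {n c : ℕ} (Lt : EuclideanSpace ℝ (Fin n ⊕ Fin c) → ℝ)
    (W : EuclideanSpace ℝ (Fin n)) (γ : EuclideanSpace ℝ (Fin c)) : EuclideanSpace ℝ (Fin c) :=
  (EuclideanSpace.equiv (Fin c) ℝ).symm (fun j => gradient Lt (pairWγ W γ) (Sum.inr j))

/-- Soft-thresholding operator `(S(x, τ))_i = sign(x_i) · max{0, |x_i| − τ}`. -/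
def softThresh {c : ℕ} (x : EuclideanSpace ℝ (Fin c)) (τ : ℝ) : EuclideanSpace ℝ (Fin c) :=
  (EuclideanSpace.equiv (Fin c) ℝ).symm (fun i => Real.sign (x i) * max 0 (|x i| - τ))

/-- The objective `F(W, γ, ξ) = L̃(W, γ) + λ‖ξ‖₁ + (β/2)‖γ − ξ‖₂²`. -/
def objF {n c : ℕ} (Lt : EuclideanSpace ℝ (Fin n ⊕ Fin c) → ℝ) (lam β : ℝ)
    (W : EuclideanSpace ℝ (Fin n)) (γ ξ : EuclideanSpace ℝ (Fin c)) : ℝ :=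
  Lt (pairWγ W γ) + lam * (∑ i, |ξ i|) + β / 2 * ‖γ - ξ‖ ^ 2

theorem soft_aux (x τ : ℝ) (hτ : 0 < τ) :
    |x - Real.sign x * max 0 (|x| - τ)| ≤ τ ∧
    (x - Real.sign x * max 0 (|x| - τ)) * (Real.sign x * max 0 (|x| - τ))
      = τ * |Real.sign x * max 0 (|x| - τ)| := by
  rcases lt_trichotomy x 0 with h | h | h
  · rw [Real.sign_of_neg h, abs_of_neg h]
    rcases le_total 0 (-x - τ) with h2 | h2
    · rw [max_eq_right h2]
      have e : x - -1 * (-x - τ) = -τ := by ring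
      rw [e, abs_neg, abs_of_pos hτ, abs_of_nonpos (by linarith)]
      exact ⟨le_refl _, by ring⟩
    · rw [max_eq_left h2]
      simp only [mul_zero, sub_zero, abs_zero, and_true]
      rw [abs_of_neg h]; linarith
  · subst h; simp [hτ.le]
  · rw [Real.sign_of_pos h, abs_of_pos h]
    rcases le_total 0 (x - τ) with h2 | h2
    · rw [max_eq_right h2]
      have e : x - 1 * (x - τ) = τ := by ring
      rw [e, abs_of_pos hτ, abs_of_nonneg (by linarith)]
      exact ⟨le_refl _, by ring⟩
    · rw [max_eq_left h2]
      simp only [mul_zero, sub_zero, abs_zero, and_true]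
      rw [abs_of_pos h]; linarith

theorem prox_aux (α β lam g' x x' : ℝ) (hα : 0 < α) (hβ : 0 < β) (hlam : 0 < lam)
    (hx : x' = Real.sign (1 / (α + β) * (α * x + β * g')) *
      max 0 (|1 / (α + β) * (α * x + β * g')| - lam / (α + β))) :
    lam * |x'| + β / 2 * (g' - x') ^ 2 + α / 2 * (x' - x) ^ 2 ≤
      lam * |x| + β / 2 * (g' - x) ^ 2 := by
  have hs : 0 < α + β := by linarith
  obtain ⟨h1, h2⟩ := soft_aux (1 / (α + β) * (α * x + β * g')) (lam / (α + β)) (by positivity)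
  rw [← hx] at h1 h2
  set s := α * x + β * g' - (α + β) * x' with hsdef
  have e : 1 / (α + β) * (α * x + β * g') - x' = s / (α + β) := by
    rw [hsdef]; field_simp
  rw [e] at h1 h2
  rw [abs_div, abs_of_pos hs, div_le_div_iff_of_pos_right hs] at h1
  have h2' : s * x' = lam * |x'| := by
    field_simp at h2; linarith
  have h3 : s * x ≤ lam * |x| := by
    calc s * x ≤ |s * x| := le_abs_self _
      _ = |s| * |x| := abs_mul _ _
      _ ≤ _ := by gcongr
  have h4 : lam * |x| - lam * |x'| ≥ s * (x - x') := by linarith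
  rw [hsdef] at h4
  nlinarith [sq_nonneg (x - x')]

theorem descent_aux {E : Type*} [NormedAddCommGroup E] [InnerProductSpace ℝ E] [CompleteSpace E]
    (f : E → ℝ) (L : ℝ) (hf : Differentiable ℝ f)
    (hLip : ∀ x y, ‖gradient f x - gradient f y‖ ≤ L * ‖x - y‖) (x d : E) :
    f (x + d) ≤ f x + inner ℝ (gradient f x) d + L / 2 * ‖d‖ ^ 2 := by
  let φ : ℝ → ℝ := fun t => f (x + t • d) - t * inner ℝ (gradient f x) d - L / 2 * ‖d‖ ^ 2 * t ^ 2
  have hφ : ∀ t, HasDerivAt φ (inner ℝ (gradient f (x + t • d)) d - inner ℝ (gradient f x) d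
      - L * ‖d‖ ^ 2 * t) t := by
    intro t
    have h1 : HasDerivAt (fun t : ℝ => x + t • d) d t := by
      simpa using ((hasDerivAt_id t).smul_const d).const_add x
    have h2 := (hf (x + t • d)).hasGradientAt.hasFDerivAt.comp_hasDerivAt t h1
    have h3 := (h2.sub ((hasDerivAt_id t).mul_const (inner ℝ (gradient f x) d))).sub
      ((hasDerivAt_pow 2 t).const_mul (L / 2 * ‖d‖ ^ 2))
    refine HasDerivAt.congr_deriv (f := φ) h3 ?_
    rw [InnerProductSpace.toDual_apply_apply]
    push_cast
    ring
  have hanti : AntitoneOn φ (Set.Icc 0 1) := by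
    apply antitoneOn_of_deriv_nonpos (convex_Icc 0 1)
    · exact fun t _ => (hφ t).continuousAt.continuousWithinAt
    · exact fun t _ => (hφ t).differentiableAt.differentiableWithinAt
    · intro t ht
      rw [interior_Icc] at ht
      rw [(hφ t).deriv, ← inner_sub_left]
      have h1 := real_inner_le_norm (gradient f (x + t • d) - gradient f x) d
      have h2 := hLip (x + t • d) x
      rw [add_sub_cancel_left, norm_smul, Real.norm_of_nonneg ht.1.le] at h2
      have h3 := mul_le_mul_of_nonneg_right h2 (norm_nonneg d)
      nlinarith
  have h := hanti (by simp) (by simp) (zero_le_one' ℝ)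
  simp only [φ] at h
  rw [one_smul, zero_smul, add_zero] at h
  linarith

theorem step_aux
    (n c : ℕ) (L lam α β : ℝ) (hlam : 0 < lam) (hα : 0 < α) (hβ : 0 < β) (hL : 0 < L)
    (Lt : EuclideanSpace ℝ (Fin n ⊕ Fin c) → ℝ)
    (hdiff : Differentiable ℝ Lt)
    (hLip : ∀ x y, ‖gradient Lt x - gradient Lt y‖ ≤ L * ‖x - y‖)
    (W W' : EuclideanSpace ℝ (Fin n)) (γ ξ γ' ξ' : EuclideanSpace ℝ (Fin c))
    (hW : W' = W - (1 / α) • gradW Lt W γ)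
    (hγ : γ' = (1 / (α + β)) • (α • γ + β • ξ) - (1 / (α + β)) • gradG Lt W γ)
    (hξ : ξ' = softThresh ((1 / (α + β)) • (α • ξ + β • γ')) (lam / (α + β))) :
    (α - L) / 2 * (‖W' - W‖ ^ 2 + ‖γ' - γ‖ ^ 2 + ‖ξ' - ξ‖ ^ 2) ≤
      objF Lt lam β W γ ξ - objF Lt lam β W' γ' ξ' := by
  have hs : 0 < α + β := by linarith
  have hd := descent_aux Lt L hdiff hLip (pairWγ W γ) (pairWγ W' γ' - pairWγ W γ)
  rw [add_sub_cancel] at hd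
  set g := gradient Lt (pairWγ W γ) with hg
  have hWi : ∀ i, g (Sum.inl i) = - α * (W' i - W i) := by
    intro i
    have := congrArg (fun v => v i) hW
    simp [gradW, ← hg] at this
    rw [this]; field_simp; ring
  have hγi : ∀ i, g (Sum.inr i) = - α * (γ' i - γ i) - β * (γ' i - ξ i) := by
    intro i
    have := congrArg (fun v => v i) hγ
    simp [gradG, ← hg] at this
    rw [this]; field_simp; ring
  have hξi : ∀ i, lam * |ξ' i| + β / 2 * (γ' i - ξ' i) ^ 2 + α / 2 * (ξ' i - ξ i) ^ 2 ≤
      lam * |ξ i| + β / 2 * (γ' i - ξ i) ^ 2 := by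
    intro i
    apply prox_aux α β lam _ _ _ hα hβ hlam
    have := congrArg (fun v => v i) hξ
    exact this
  unfold objF
  rw [PiLp.inner_apply, EuclideanSpace.real_norm_sq_eq, Fintype.sum_sum_type,
    Fintype.sum_sum_type] at hd
  simp only [EuclideanSpace.real_norm_sq_eq]
  simp [pairWγ, hWi, hγi] at hd
  simp only [PiLp.sub_apply]
  have k1 : (α - L) / 2 * ∑ i, (W' i - W i) ^ 2 +
      ∑ i, (W' i - W i) * (- α * (W' i - W i)) + L / 2 * ∑ i, (W' i - W i) ^ 2 ≤ 0 := by
    simp only [Finset.mul_sum, ← Finset.sum_add_distrib]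
    apply Finset.sum_nonpos
    intro i _
    nlinarith [sq_nonneg (W' i - W i)]
  have k2 : (α - L) / 2 * ∑ i, (γ' i - γ i) ^ 2 + (α - L) / 2 * ∑ i, (ξ' i - ξ i) ^ 2 +
      ∑ i, (γ' i - γ i) * (- α * (γ' i - γ i) - β * (γ' i - ξ i)) +
      L / 2 * ∑ i, (γ' i - γ i) ^ 2 + lam * ∑ i, |ξ' i| + β / 2 * ∑ i, (γ' i - ξ' i) ^ 2
      ≤ lam * ∑ i, |ξ i| + β / 2 * ∑ i, (γ i - ξ i) ^ 2 := by
    simp only [Finset.mul_sum, ← Finset.sum_add_distrib]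
    apply Finset.sum_le_sum
    intro i _
    have h1 := mul_nonneg hα.le (sq_nonneg (γ' i - γ i))
    have h2 := mul_nonneg hβ.le (sq_nonneg (γ' i - γ i))
    have h3 := mul_nonneg hL.le (sq_nonneg (ξ' i - ξ i))
    nlinarith [hξi i]
  simp only [pairWγ] at *
  simp at k1 k2 ⊢
  linarith

/-- (Lemma 3, square-summability.) -/
theorem square_summability
    (n c : ℕ) (hn : 0 < n) (hc : 0 < c)
    (L lam α β : ℝ) (hL : 0 < L) (hlam : 0 < lam) (hα : 0 < α) (hβ : 0 < β)
    (hαL : L < α)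
    (Lt : EuclideanSpace ℝ (Fin n ⊕ Fin c) → ℝ)
    (hdiff : Differentiable ℝ Lt)
    (hnonneg : ∀ x, 0 ≤ Lt x)
    (hLip : ∀ x y, ‖gradient Lt x - gradient Lt y‖ ≤ L * ‖x - y‖)
    (W : ℕ → EuclideanSpace ℝ (Fin n)) (γ ξ : ℕ → EuclideanSpace ℝ (Fin c))
    (hW : ∀ t, W (t + 1) = W t - (1 / α) • gradW Lt (W t) (γ t))
    (hγ : ∀ t, γ (t + 1) =
      (1 / (α + β)) • (α • γ t + β • ξ t) - (1 / (α + β)) • gradG Lt (W t) (γ t))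
    (hξ : ∀ t, ξ (t + 1) =
      softThresh ((1 / (α + β)) • (α • ξ t + β • γ (t + 1))) (lam / (α + β))) :
    (∀ N : ℕ, 1 ≤ N →
      (∑ t ∈ Finset.Ico 1 N, (α - L) / 2 *
          (‖W (t + 1) - W t‖ ^ 2 + ‖γ (t + 1) - γ t‖ ^ 2 + ‖ξ (t + 1) - ξ t‖ ^ 2)) ≤
        objF Lt lam β (W 1) (γ 1) (ξ 1) - objF Lt lam β (W N) (γ N) (ξ N) ∧
      objF Lt lam β (W 1) (γ 1) (ξ 1) - objF Lt lam β (W N) (γ N) (ξ N) ≤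
        objF Lt lam β (W 1) (γ 1) (ξ 1)) ∧
    Summable (fun t : ℕ =>
      ‖W (t + 2) - W (t + 1)‖ ^ 2 + ‖γ (t + 2) - γ (t + 1)‖ ^ 2 + ‖ξ (t + 2) - ξ (t + 1)‖ ^ 2) ∧
    (∑' t : ℕ,
        (‖W (t + 2) - W (t + 1)‖ ^ 2 + ‖γ (t + 2) - γ (t + 1)‖ ^ 2 +
          ‖ξ (t + 2) - ξ (t + 1)‖ ^ 2)) ≤
      2 / (α - L) * objF Lt lam β (W 1) (γ 1) (ξ 1) := by
  have hstep : ∀ t, (α - L) / 2 *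
      (‖W (t + 1) - W t‖ ^ 2 + ‖γ (t + 1) - γ t‖ ^ 2 + ‖ξ (t + 1) - ξ t‖ ^ 2) ≤
      objF Lt lam β (W t) (γ t) (ξ t) - objF Lt lam β (W (t + 1)) (γ (t + 1)) (ξ (t + 1)) :=
    fun t => step_aux n c L lam α β hlam hα hβ hL Lt hdiff hLip _ _ _ _ _ _ (hW t) (hγ t) (hξ t)
  have hF : ∀ t, 0 ≤ objF Lt lam β (W t) (γ t) (ξ t) := by
    intro t
    unfold objF
    have := hnonneg (pairWγ (W t) (γ t))
    positivity
  have hsum : ∀ m : ℕ, ∑ t ∈ Finset.range m, (α - L) / 2 *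
      (‖W (t + 2) - W (t + 1)‖ ^ 2 + ‖γ (t + 2) - γ (t + 1)‖ ^ 2 + ‖ξ (t + 2) - ξ (t + 1)‖ ^ 2) ≤
      objF Lt lam β (W 1) (γ 1) (ξ 1) - objF Lt lam β (W (m + 1)) (γ (m + 1)) (ξ (m + 1)) := by
    intro m
    induction m with
    | zero => simp
    | succ k ih =>
      rw [Finset.sum_range_succ]
      have := hstep (k + 1)
      linarith
  have hpos : 0 < α - L := by linarith
  have hbd : ∀ m : ℕ, ∑ t ∈ Finset.range m,
      (‖W (t + 2) - W (t + 1)‖ ^ 2 + ‖γ (t + 2) - γ (t + 1)‖ ^ 2 + ‖ξ (t + 2) - ξ (t + 1)‖ ^ 2) ≤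
      2 / (α - L) * objF Lt lam β (W 1) (γ 1) (ξ 1) := by
    intro m
    have h := hsum m
    rw [← Finset.mul_sum] at h
    have h0 := hF (m + 1)
    rw [div_mul_eq_mul_div, le_div_iff₀ hpos]
    linarith
  refine ⟨?_, ?_, ?_⟩
  · intro N hN
    obtain ⟨m, rfl⟩ := Nat.exists_eq_add_of_le' hN
    refine ⟨?_, by linarith [hF (m + 1)]⟩
    rw [Finset.sum_Ico_eq_sum_range]
    refine le_trans (le_of_eq ?_) (hsum m)
    simp only [Nat.add_sub_cancel]
    refine Finset.sum_congr rfl fun t _ => ?_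
    rw [show 1 + t = t + 1 from Nat.add_comm _ _]
  · exact summable_of_sum_range_le (fun t => by positivity) hbd
  · exact Real.tsum_le_of_sum_range_le (fun t => by positivity) hbd
end
end

section
/- (Vanishing successive differences) If α > L, then the sequence {Z^t} generated by the proximal network-slimming iteration satisfies ‖Z^{t+1} − Z^t‖₂ → 0 as t → ∞. -/
noncomputable section

theorem aux_descent {E : Type*} [NormedAddCommGroup E] [InnerProductSpace ℝ E] [CompleteSpace E]
    (f : E → ℝ) (L : ℝ) (hdiff : Differentiable ℝ f)
    (hLip : ∀ x y, ‖gradient f x - gradient f y‖ ≤ L * ‖x - y‖) (x d : E) :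
    f (x + d) ≤ f x + inner ℝ (gradient f x) d + L / 2 * ‖d‖ ^ 2 := by
  have hder : ∀ t : ℝ, HasDerivAt
      (fun t : ℝ => f (x + t • d) - t * inner ℝ (gradient f x) d - L / 2 * t ^ 2 * ‖d‖ ^ 2)
      (inner ℝ (gradient f (x + t • d)) d - inner ℝ (gradient f x) d - L * t * ‖d‖ ^ 2) t := by
    intro t
    have h1 : HasDerivAt (fun t : ℝ => x + t • d) d t := by
      simpa using ((hasDerivAt_id t).smul_const d).const_add x
    have h2 := ((hdiff (x + t • d)).hasGradientAt.hasFDerivAt).comp_hasDerivAt t h1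
    have h3 : HasDerivAt (fun t : ℝ => t * inner ℝ (gradient f x) d)
        (inner ℝ (gradient f x) d) t := by
      simpa using (hasDerivAt_id t).mul_const (inner ℝ (gradient f x) d)
    have h4 : HasDerivAt (fun t : ℝ => L / 2 * t ^ 2 * ‖d‖ ^ 2) (L * t * ‖d‖ ^ 2) t := by
      have := ((hasDerivAt_pow 2 t).const_mul (L / 2)).mul_const (‖d‖ ^ 2)
      refine this.congr_deriv ?_
      push_cast
      ring
    rw [InnerProductSpace.toDual_apply_apply] at h2
    exact (h2.sub h3).sub h4
  have hanti := antitoneOn_of_deriv_nonpos (convex_Icc (0 : ℝ) 1)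
    (fun t _ => (hder t).continuousAt.continuousWithinAt)
    (fun t _ => (hder t).differentiableAt.differentiableWithinAt)
    (by
      intro t ht
      rw [interior_Icc] at ht
      rw [(hder t).deriv, ← inner_sub_left]
      have h1 := real_inner_le_norm (gradient f (x + t • d) - gradient f x) d
      have h2 := hLip (x + t • d) x
      rw [add_sub_cancel_left, norm_smul, Real.norm_eq_abs, abs_of_pos ht.1] at h2
      have h3 := mul_le_mul_of_nonneg_right h2 (norm_nonneg d)
      nlinarith)
  have := hanti (Set.left_mem_Icc.2 zero_le_one) (Set.right_mem_Icc.2 zero_le_one) zero_le_one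
  simp only [one_smul, zero_smul, add_zero] at this
  linarith

theorem aux_soft (v τ u : ℝ) (hτ : 0 ≤ τ) :
    ((Real.sign v * max 0 (|v| - τ)) - v) ^ 2 / 2 + τ * |Real.sign v * max 0 (|v| - τ)|
      ≤ (u - v) ^ 2 / 2 + τ * |u| := by
  have hu1 := le_abs_self u
  have hu2 := neg_abs_le u
  have h0 := abs_nonneg u
  rcases lt_trichotomy v 0 with hv | hv | hv
  · rw [Real.sign_of_neg hv, abs_of_neg hv]
    rcases le_total (-v - τ) 0 with h | h
    · rw [max_eq_left h]; simp; nlinarith [sq_nonneg u]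
    · rw [max_eq_right h, abs_of_nonpos (by linarith)]; nlinarith [sq_nonneg (u - v - τ)]
  · subst hv; simp; positivity
  · rw [Real.sign_of_pos hv, abs_of_pos hv]
    rcases le_total (v - τ) 0 with h | h
    · rw [max_eq_left h]; simp; nlinarith [sq_nonneg u]
    · rw [max_eq_right h, abs_of_nonneg (by linarith)]; nlinarith [sq_nonneg (u - v + τ)]

theorem aux_prox (α β lam ξ g s : ℝ) (hα : 0 < α) (hβ : 0 < β) (hlam : 0 < lam)
    (hs : s = Real.sign (1 / (α + β) * (α * ξ + β * g)) *
      max 0 (|1 / (α + β) * (α * ξ + β * g)| - lam / (α + β))) :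
    lam * |s| + α / 2 * (s - ξ) ^ 2 + β / 2 * (g - s) ^ 2 ≤ lam * |ξ| + β / 2 * (g - ξ) ^ 2 := by
  have hab : 0 < α + β := by positivity
  have h := aux_soft (1 / (α + β) * (α * ξ + β * g)) (lam / (α + β)) ξ (by positivity)
  rw [← hs] at h
  obtain ⟨v, hv⟩ : ∃ v, v = 1 / (α + β) * (α * ξ + β * g) := ⟨_, rfl⟩
  obtain ⟨τ, hτ⟩ : ∃ τ, τ = lam / (α + β) := ⟨_, rfl⟩
  rw [← hv, ← hτ] at h
  have hv' : (α + β) * v = α * ξ + β * g := by rw [hv]; field_simp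
  have hτ' : lam = (α + β) * τ := by rw [hτ]; field_simp
  have h2 := mul_le_mul_of_nonneg_left h hab.le
  rw [hτ']
  have e : ∀ u, (α + β) * ((u - v) ^ 2 / 2 + τ * |u|) = (α + β) * τ * |u| + (α + β) / 2 * u ^ 2
      - u * (α * ξ + β * g) + (α + β) * v ^ 2 / 2 := by
    intro u; rw [← hv']; ring
  rw [e, e] at h2
  nlinarith

theorem aux_step {n c : ℕ}
    (L lam α β : ℝ) (hlam : 0 < lam) (hα : 0 < α) (hβ : 0 < β)
    (hαL : L < α)
    (Lt : EuclideanSpace ℝ (Fin n ⊕ Fin c) → ℝ)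
    (hdiff : Differentiable ℝ Lt)
    (hLip : ∀ x y, ‖gradient Lt x - gradient Lt y‖ ≤ L * ‖x - y‖)
    (W W' : EuclideanSpace ℝ (Fin n)) (γ ξ γ' ξ' : EuclideanSpace ℝ (Fin c))
    (hW : W' = W - (1 / α) • gradW Lt W γ)
    (hγ : γ' = (1 / (α + β)) • (α • γ + β • ξ) - (1 / (α + β)) • gradG Lt W γ)
    (hξ : ξ' = softThresh ((1 / (α + β)) • (α • ξ + β • γ')) (lam / (α + β))) :
    objF Lt lam β W' γ' ξ' + α / 2 * (‖W' - W‖ ^ 2 + ‖γ' - γ‖ ^ 2 + ‖ξ' - ξ‖ ^ 2)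
      ≤ objF Lt lam β W γ ξ := by
  have hab : 0 < α + β := by positivity
  have hd := aux_descent Lt L hdiff hLip (pairWγ W γ) (pairWγ W' γ' - pairWγ W γ)
  rw [add_sub_cancel] at hd
  have e1 : ‖pairWγ W' γ' - pairWγ W γ‖ ^ 2 = ‖W' - W‖ ^ 2 + ‖γ' - γ‖ ^ 2 := by
    simp [EuclideanSpace.real_norm_sq_eq, pairWγ]
  have e2 : inner ℝ (gradient Lt (pairWγ W γ)) (pairWγ W' γ' - pairWγ W γ)
      = ∑ i, gradW Lt W γ i * (W' i - W i) + ∑ j, gradG Lt W γ j * (γ' j - γ j) := by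
    rw [PiLp.inner_apply, Fintype.sum_sum_type]
    congr 1
    · refine Finset.sum_congr rfl fun i _ => ?_
      rw [real_inner_comm]
      rfl
    · refine Finset.sum_congr rfl fun i _ => ?_
      rw [real_inner_comm]
      rfl
  have e3 : ∑ i, gradW Lt W γ i * (W' i - W i) = - α * ‖W' - W‖ ^ 2 := by
    rw [EuclideanSpace.real_norm_sq_eq, Finset.mul_sum]
    refine Finset.sum_congr rfl fun i _ => ?_
    have : W' i = W i - 1 / α * gradW Lt W γ i := by rw [hW]; simp
    have h : gradW Lt W γ i = - α * (W' i - W i) := by rw [this]; field_simp; ring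
    rw [h]; simp; ring
  have e4 : ∑ j, gradG Lt W γ j * (γ' j - γ j) + β / 2 * ‖γ' - ξ‖ ^ 2
      = β / 2 * ‖γ - ξ‖ ^ 2 - (α + β / 2) * ‖γ' - γ‖ ^ 2 := by
    simp only [EuclideanSpace.real_norm_sq_eq, Finset.mul_sum]
    rw [← Finset.sum_add_distrib, ← Finset.sum_sub_distrib]
    refine Finset.sum_congr rfl fun j _ => ?_
    have : γ' j = 1 / (α + β) * (α * γ j + β * ξ j) - 1 / (α + β) * gradG Lt W γ j := by
      rw [hγ]; rfl
    have h : gradG Lt W γ j = α * γ j + β * ξ j - (α + β) * γ' j := by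
      rw [this]; field_simp; ring
    rw [h]; simp; ring
  have e5 : lam * (∑ i, |ξ' i|) + α / 2 * ‖ξ' - ξ‖ ^ 2 + β / 2 * ‖γ' - ξ'‖ ^ 2
      ≤ lam * (∑ i, |ξ i|) + β / 2 * ‖γ' - ξ‖ ^ 2 := by
    simp only [EuclideanSpace.real_norm_sq_eq, Finset.mul_sum]
    rw [← Finset.sum_add_distrib, ← Finset.sum_add_distrib, ← Finset.sum_add_distrib]
    refine Finset.sum_le_sum fun j _ => ?_
    refine aux_prox α β lam (ξ j) (γ' j) (ξ' j) hα hβ hlam ?_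
    rw [hξ]; rfl
  rw [e1, e2, e3] at hd
  unfold objF
  have p1 := mul_nonneg (sub_nonneg.2 hαL.le) (sq_nonneg ‖W' - W‖)
  have p2 := mul_nonneg (sub_nonneg.2 hαL.le) (sq_nonneg ‖γ' - γ‖)
  have p3 := mul_nonneg hβ.le (sq_nonneg ‖γ' - γ‖)
  nlinarith

/-- (Vanishing successive differences.) -/
theorem vanishing_successive_differences
    (n c : ℕ) (hn : 0 < n) (hc : 0 < c)
    (L lam α β : ℝ) (hL : 0 < L) (hlam : 0 < lam) (hα : 0 < α) (hβ : 0 < β)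
    (hαL : L < α)
    (Lt : EuclideanSpace ℝ (Fin n ⊕ Fin c) → ℝ)
    (hdiff : Differentiable ℝ Lt)
    (hnonneg : ∀ x, 0 ≤ Lt x)
    (hLip : ∀ x y, ‖gradient Lt x - gradient Lt y‖ ≤ L * ‖x - y‖)
    (W : ℕ → EuclideanSpace ℝ (Fin n)) (γ ξ : ℕ → EuclideanSpace ℝ (Fin c))
    (hW : ∀ t, W (t + 1) = W t - (1 / α) • gradW Lt (W t) (γ t))
    (hγ : ∀ t, γ (t + 1) =
      (1 / (α + β)) • (α • γ t + β • ξ t) - (1 / (α + β)) • gradG Lt (W t) (γ t))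
    (hξ : ∀ t, ξ (t + 1) =
      softThresh ((1 / (α + β)) • (α • ξ t + β • γ (t + 1))) (lam / (α + β))) :
    Filter.Tendsto
      (fun t : ℕ => Real.sqrt
        (‖W (t + 1) - W t‖ ^ 2 + ‖γ (t + 1) - γ t‖ ^ 2 + ‖ξ (t + 1) - ξ t‖ ^ 2))
      Filter.atTop (nhds 0) := by
  have hstep := fun t => aux_step L lam α β hlam hα hβ hαL Lt hdiff hLip (W t) (W (t+1)) (γ t)
    (ξ t) (γ (t+1)) (ξ (t+1)) (hW t) (hγ t) (hξ t)
  obtain ⟨F, hF⟩ : ∃ F : ℕ → ℝ, F = fun t => objF Lt lam β (W t) (γ t) (ξ t) := ⟨_, rfl⟩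
  have hstep' : ∀ t, F (t+1) + α / 2 * (‖W (t + 1) - W t‖ ^ 2 + ‖γ (t + 1) - γ t‖ ^ 2
      + ‖ξ (t + 1) - ξ t‖ ^ 2) ≤ F t := by
    intro t; rw [hF]; exact hstep t
  have hanti : Antitone F := antitone_nat_of_succ_le fun t => by
    have : 0 ≤ α / 2 * (‖W (t + 1) - W t‖ ^ 2 + ‖γ (t + 1) - γ t‖ ^ 2
      + ‖ξ (t + 1) - ξ t‖ ^ 2) := by positivity
    linarith [hstep' t]
  have hbdd : BddBelow (Set.range F) := by
    refine ⟨0, ?_⟩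
    rintro _ ⟨t, rfl⟩
    rw [hF]
    have := hnonneg (pairWγ (W t) (γ t))
    simp only [objF]
    positivity
  have hlim := tendsto_atTop_ciInf hanti hbdd
  have hlim2 : Filter.Tendsto (fun t => 2 / α * (F t - F (t+1))) Filter.atTop (nhds 0) := by
    simpa using (hlim.sub (hlim.comp (Filter.tendsto_add_atTop_nat 1))).const_mul (2 / α)
  have hD : Filter.Tendsto (fun t => ‖W (t + 1) - W t‖ ^ 2 + ‖γ (t + 1) - γ t‖ ^ 2
      + ‖ξ (t + 1) - ξ t‖ ^ 2) Filter.atTop (nhds 0) := by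
    refine squeeze_zero (fun t => by positivity) (fun t => ?_) hlim2
    have := hstep' t
    rw [div_mul_eq_mul_div, le_div_iff₀ hα]
    linarith
  simpa using hD.sqrt
end
end
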